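/- In the mismatch setup, for any full-support probability distribution α on U with g_α(u) := −Σ_{u'} T(u'|u)·ln((Tα)(u')) + ln α(u) − Q(u), and for any probability distribution β on U, one has Σ_{u} β(u)·g_α(u) = D(Tβ ‖ Tα) − D(β ‖ α) + σ̄(β). -/

import Mathlib

open scoped BigOperators

/-- Shannon entropy (natural log) of a distribution on a finite type. -/
noncomputable def shannonH {U : Type*} [Fintype U] (p : U → ℝ) : ℝ :=
  -∑ u, p u * Real.log (p u)

/-- Kullback–Leibler divergence between two distributions on a finite type
(with the convention 0·ln(0/q) = 0, automatic since `Real.log 0 = 0`). -/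
noncomputable def klDiv {U : Type*} [Fintype U] (p q : U → ℝ) : ℝ :=
  ∑ u, p u * Real.log (p u / q u)

/-- Action of a Markov kernel `T` (where `T u` is the distribution `T(·|u)`) on
a distribution `p`: `(Tp)(u') = Σ_u p(u)·T(u'|u)`. -/
noncomputable def kernelAct {U : Type*} [Fintype U] (T : U → U → ℝ) (p : U → ℝ) :
    U → ℝ :=
  fun u' => ∑ u, p u * T u u'

/-- The entropy production functional of the mismatch setup:
σ̄(p) = H(Tp) − H(p) − Σ_u p(u)·Q(u). -/
noncomputable def epFunctional {U : Type*} [Fintype U] (T : U → U → ℝ)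
    (Q : U → ℝ) (p : U → ℝ) : ℝ :=
  shannonH (kernelAct T p) - shannonH p - ∑ u, p u * Q u

/-- The u-component of the gradient of σ̄ at a full-support distribution α:
g_α(u) = −Σ_{u'} T(u'|u)·ln((Tα)(u')) + ln α(u) − Q(u). -/
noncomputable def epGrad {U : Type*} [Fintype U] (T : U → U → ℝ) (Q : U → ℝ)
    (α : U → ℝ) : U → ℝ :=
  fun u => -(∑ u', T u u' * Real.log (kernelAct T α u')) + Real.log (α u) - Q u

/-!
Both sides are combinations of cross entropies. Averaging `-∑ u', T u u' * log (Tα u')` against `β`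
gives the cross entropy of `Tβ` relative to `Tα`, while a divergence is a cross entropy minus an
entropy; the entropies of `Tβ` and `β` so subtracted are exactly the ones in `σ̄(β)`. Splitting the
divergences requires `β ≪ α` and `Tβ ≪ Tα`, and the former implies the latter.
-/

/-- Cross entropy `-∑ p ln q` (natural log) of `p` relative to `q`, the common part of divergences
and of pairings with `epGrad`. As `Real.log 0 = 0`, it is the usual one only when `p` vanishes
wherever `q` does; otherwise the usual one is infinite. -/
noncomputable def crossEntropy {U : Type*} [Fintype U] (p q : U → ℝ) : ℝ :=
  -∑ u, p u * Real.log (q u)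

section

variable {U : Type*} [Fintype U]

theorem klDiv_eq_crossEntropy_sub_shannonH {p q : U → ℝ}
    (hpq : Function.support p ⊆ Function.support q) :
    klDiv p q = crossEntropy p q - shannonH p := by
  have log_split (u : U) :
      p u * Real.log (p u / q u) = p u * Real.log (p u) - p u * Real.log (q u) := by
    by_cases hp : p u = 0
    · simp [hp]
    · rw [Real.log_div hp (hpq hp), mul_sub]
  simp only [klDiv, crossEntropy, shannonH, log_split, Finset.sum_sub_distrib]
  ring

theorem support_kernelAct_mono {T : U → U → ℝ} (hT : ∀ u u', 0 ≤ T u u') {p q : U → ℝ}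
    (hq : ∀ u, 0 ≤ q u) (hpq : Function.support p ⊆ Function.support q) :
    Function.support (kernelAct T p) ⊆ Function.support (kernelAct T q) := by
  intro u' hu'
  obtain ⟨u, -, hu⟩ : ∃ u ∈ Finset.univ, p u * T u u' ≠ 0 :=
    Finset.exists_ne_zero_of_sum_ne_zero hu'
  have q_pos : 0 < q u := (hq u).lt_of_ne' (hpq (left_ne_zero_of_mul hu))
  have T_pos : 0 < T u u' := (hT u u').lt_of_ne' (right_ne_zero_of_mul hu)
  have kernelAct_pos : 0 < kernelAct T q u' :=
    Finset.sum_pos' (fun v _ => mul_nonneg (hq v) (hT v u'))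
      ⟨u, Finset.mem_univ u, mul_pos q_pos T_pos⟩
  exact kernelAct_pos.ne'

theorem sum_kernelAct_mul (T : U → U → ℝ) (p f : U → ℝ) :
    ∑ u', kernelAct T p u' * f u' = ∑ u, p u * ∑ u', T u u' * f u' := by
  simp only [kernelAct, Finset.sum_mul, Finset.mul_sum, mul_assoc]
  exact Finset.sum_comm

theorem sum_mul_epGrad (T : U → U → ℝ) (Q p q : U → ℝ) :
    ∑ u, p u * epGrad T Q q u =
      crossEntropy (kernelAct T p) (kernelAct T q) - crossEntropy p q - ∑ u, p u * Q u := by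
  simp only [crossEntropy, sum_kernelAct_mul, epGrad, mul_sub, mul_add, mul_neg,
    Finset.sum_sub_distrib, Finset.sum_add_distrib, Finset.sum_neg_distrib]
  ring

end

-- Off the support of `α`, the junk value `Real.log 0 = 0` in `epGrad` has weight `β u = 0`.
theorem inner_product_grad_other_general {U : Type*} [Fintype U]
    (T : U → U → ℝ) (hT : ∀ u u', 0 ≤ T u u') (Q : U → ℝ)
    (α : U → ℝ) (hα : ∀ u, 0 ≤ α u)
    (β : U → ℝ) (_hβ : ∀ u, 0 ≤ β u) (hβα : Function.support β ⊆ Function.support α) :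
    ∑ u, β u * epGrad T Q α u =
      klDiv (kernelAct T β) (kernelAct T α) - klDiv β α + epFunctional T Q β := by
  rw [sum_mul_epGrad, klDiv_eq_crossEntropy_sub_shannonH (support_kernelAct_mono hT hα hβα),
    klDiv_eq_crossEntropy_sub_shannonH hβα, epFunctional]
  ring

/-- In the mismatch setup, for any full-support probability distribution α and
any probability distribution β on U,
Σ_u β(u)·g_α(u) = D(Tβ ‖ Tα) − D(β ‖ α) + σ̄(β). -/
theorem inner_product_grad_other
    {U : Type*} [Fintype U]
    (T : U → U → ℝ) (hT : ∀ u u', 0 ≤ T u u') (hTsum : ∀ u, ∑ u', T u u' = 1)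
    (Q : U → ℝ)
    (α : U → ℝ) (hα : ∀ u, 0 < α u) (hαsum : ∑ u, α u = 1)
    (β : U → ℝ) (hβ : ∀ u, 0 ≤ β u) (hβsum : ∑ u, β u = 1) :
    ∑ u, β u * epGrad T Q α u =
      klDiv (kernelAct T β) (kernelAct T α) - klDiv β α + epFunctional T Q β :=
  inner_product_grad_other_general T hT Q α (fun u => (hα u).le) β hβ
    fun u _ => (hα u).ne'
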